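/- For every real α > 1 let c_α := min( 1 + 2^{α−4} − 1/8, 1 + (2^{α−1}−1)/(3·2^α+2), 1 + min(2^α−1, (3^α−2^α−1)/2, (4^α−2^α−2)/3)/(4(2^α+1)) ); then c_α > 1, and there exists N such that for every n ≥ N there exist a circumference L > 0, a set P of 2n+2 points on the circle of circumference L containing a source s, and a point q on that circle with q ∉ P, with the following property: for every feasible range assignment ρ for P with cost_α(ρ) ≤ c_α·opt_α(P) and every feasible range assignment ρ' for P ∪ {q} with cost_α(ρ') ≤ c_α·opt_α(P∪{q}), the number of points p ∈ P ∪ {q} with ρ(p) ≠ ρ'(p) is greater than 2n/3 − 1, where ρ is extended by ρ(q) = 0. (Hence the dynamic broadcast range-assignment problem on the circle admits no stable approximation scheme.) -/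

import Mathlib

open Finset

attribute [local instance] Classical.propDecidable

/-- A range assignment `ρ` for a finite point set `P` with source `s` is *feasible* if it is
nonnegative on `P` and every point of `P` is reachable from `s` via a sequence of points of `P`
in which each step is within the range of its starting point. -/
def Feasible {X : Type*} [MetricSpace X] (P : Finset X) (s : X) (ρ : X → ℝ) : Prop :=
  (∀ p ∈ P, 0 ≤ ρ p) ∧
  ∀ p ∈ P, ∃ (m : ℕ) (f : ℕ → X), f 0 = s ∧ f m = p ∧ (∀ i ≤ m, f i ∈ P) ∧
    ∀ i < m, dist (f i) (f (i + 1)) ≤ ρ (f i)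

/-- The cost `∑_{p ∈ P} ρ(p)^α` of a range assignment. -/
noncomputable def cost {X : Type*} (α : ℝ) (P : Finset X) (ρ : X → ℝ) : ℝ :=
  ∑ p ∈ P, ρ p ^ α

/-- The optimal broadcast cost: the infimum of `cost α P ρ` over feasible `ρ`. -/
noncomputable def opt {X : Type*} [MetricSpace X] (α : ℝ) (P : Finset X) (s : X) : ℝ :=
  sInf {c : ℝ | ∃ ρ : X → ℝ, Feasible P s ρ ∧ cost α P ρ = c}

/-- The constant `c_α` from the no-SAS proof on the circle. -/
noncomputable def cAlpha (α : ℝ) : ℝ :=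
  min (1 + 2 ^ (α - 4) - 1 / 8)
    (min (1 + (2 ^ (α - 1) - 1) / (3 * 2 ^ α + 2))
      (1 + min (2 ^ α - 1) (min ((3 ^ α - 2 ^ α - 1) / 2) ((4 ^ α - 2 ^ α - 2) / 3)) /
        (4 * (2 ^ α + 1))))


lemma rpow_incr {α : ℝ} (hα : 1 < α) {u v d : ℝ} (hu : 0 ≤ u) (huv : u ≤ v) (hd : 0 ≤ d) :
    (u + d) ^ α + v ^ α ≤ u ^ α + (v + d) ^ α := by
  have hc := convexOn_rpow hα.le
  rcases eq_or_lt_of_le hd with h0 | h0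
  · subst h0; simp
  have hw : 0 < v - u + d := by linarith
  have hs : d / (v - u + d) + (v - u) / (v - u + d) = 1 := by field_simp; ring
  have mu : u ∈ Set.Ici (0:ℝ) := hu
  have mv : v + d ∈ Set.Ici (0:ℝ) := by simp only [Set.mem_Ici]; linarith
  have n1 : 0 ≤ (v - u) / (v - u + d) := div_nonneg (by linarith) hw.le
  have n2 : 0 ≤ d / (v - u + d) := div_nonneg hd hw.le
  have h1 := hc.2 mu mv n1 n2 (by linarith)
  have h2 := hc.2 mu mv n2 n1 (by linarith)
  simp only [smul_eq_mul] at h1 h2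
  have e1 : (v - u) / (v - u + d) * u + d / (v - u + d) * (v + d) = u + d := by
    field_simp; ring
  have e2 : d / (v - u + d) * u + (v - u) / (v - u + d) * (v + d) = v := by
    field_simp; ring
  rw [e1] at h1
  rw [e2] at h2
  have : (v - u) / (v - u + d) * u ^ α + d / (v - u + d) * (v + d) ^ α + 
     (d / (v - u + d) * u ^ α + (v - u) / (v - u + d) * (v + d) ^ α) = u ^ α + (v+d)^α := by
    field_simp; ring
  linarith

/-- alternating gap sequences -/
def Alt (g : ℕ → ℝ) : Prop := ∀ i, (g i = 1 ∧ g (i + 1) = 2) ∨ (g i = 2 ∧ g (i + 1) = 1)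

/-- the bounds on the excess per point -/
def Ex (α m : ℝ) : Prop := 0 ≤ m ∧ m ≤ 2 ^ α - 1 ∧ 2 * m ≤ 3 ^ α - 2 ^ α - 1 ∧
  3 * m ≤ 4 ^ α - 2 ^ α - 2

/-- positions -/
noncomputable def XX (g : ℕ → ℝ) (j : ℕ) : ℝ := ∑ i ∈ range j, g i

lemma XX_succ (g : ℕ → ℝ) (j : ℕ) : XX g (j + 1) = XX g j + g j := sum_range_succ _ _
@[simp] lemma XX_zero (g : ℕ → ℝ) : XX g 0 = 0 := by simp [XX]

lemma Alt.one_le {g : ℕ → ℝ} (hg : Alt g) (i : ℕ) : 1 ≤ g i := by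
  rcases hg i with h | h <;> rw [h.1] <;> norm_num
lemma Alt.le_two {g : ℕ → ℝ} (hg : Alt g) (i : ℕ) : g i ≤ 2 := by
  rcases hg i with h | h <;> rw [h.1] <;> norm_num
lemma Alt.strictMono {g : ℕ → ℝ} (hg : Alt g) : StrictMono (XX g) :=
  strictMono_nat_of_lt_succ fun n => by rw [XX_succ]; linarith [hg.one_le n]
lemma Alt.nat_le {g : ℕ → ℝ} (hg : Alt g) (i : ℕ) : (i : ℝ) ≤ XX g i := by
  induction i with
  | zero => simp
  | succ k ih => rw [XX_succ]; push_cast; linarith [hg.one_le k]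

lemma excess_interval {α m : ℝ} (hα : 1 < α) (hm : Ex α m) {g : ℕ → ℝ} (hg : Alt g) (j t : ℕ)
    (ht : 2 ≤ t) :
    ∑ i ∈ range t, (g (j + i) ^ α + m) ≤ (∑ i ∈ range t, g (j + i)) ^ α := by
  obtain ⟨m0, m1, m2, m3⟩ := hm
  have base2 : ∀ j, g j ^ α + g (j + 1) ^ α + 2 * m ≤ (g j + g (j + 1)) ^ α := by
    intro j
    rcases hg j with h | h <;> rw [h.1, h.2] <;> norm_num <;> linarith
  have h54 := rpow_incr hα (u := 1) (v := 4) (d := 1) (by norm_num) (by norm_num) (by norm_num)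
  norm_num at h54
  induction t using Nat.strong_induction_on with
  | _ t ih =>
    obtain rfl | rfl | h4 : t = 2 ∨ t = 3 ∨ 4 ≤ t := by omega
    · simp only [sum_range_succ, range_zero, sum_empty, add_zero]
      have := base2 j
      simp only [zero_add]
      linarith
    · simp only [sum_range_succ, range_zero, sum_empty, add_zero]
      have h1 := hg (j + 1)
      rw [show j + 1 + 1 = j + 2 by ring] at h1
      rcases hg j with h | h
      · rcases h1 with h1 | h1
        · linarith [h.2, h1.1]
        rw [h.1, h1.1, h1.2]; norm_num; linarith
      · rcases h1 with h1 | h1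
        swap
        · linarith [h.2, h1.1]
        rw [h.1, h1.1, h1.2]; norm_num; linarith
    · obtain ⟨k, rfl⟩ : ∃ k, t = k + 2 := ⟨t - 2, by omega⟩
      have := ih k (by omega) (by omega)
      rw [sum_range_succ, sum_range_succ, sum_range_succ _ (k + 1), sum_range_succ _ k]
      have b := base2 (j + k)
      have hs : 0 ≤ ∑ i ∈ range k, g (j + i) :=
        sum_nonneg fun i _ => by linarith [hg.one_le (j + i)]
      have := Real.add_rpow_le_rpow_add hs (b := g (j + k) + g (j + k + 1))
        (by linarith [hg.one_le (j + k), hg.one_le (j + k + 1)]) hα.le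
      rw [show j + (k + 1) = j + k + 1 by ring]
      rw [← add_assoc] at this
      linarith

lemma T_eq {g : ℕ → ℝ} (hg : Alt g) (j N : ℕ) (c : ℝ) (hc : XX g j ≤ c) (hj : j ≤ N) :
    ∃ t, (Ico j N).filter (fun i => XX g (i + 1) ≤ c) = Ico j (j + t) ∧ XX g (j + t) ≤ c ∧
      j + t ≤ N ∧ (j < N → t = 0 → c < XX g (j + 1)) := by
  set t := Nat.findGreatest (fun t => XX g (j + t) ≤ c) (N - j) with ht
  have hP : XX g (j + t) ≤ c :=
    Nat.findGreatest_spec (P := fun t => XX g (j + t) ≤ c) (Nat.zero_le _) (by simpa using hc)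
  have hle : t ≤ N - j := Nat.findGreatest_le _
  refine ⟨t, ?_, hP, by omega, ?_⟩
  · ext i
    simp only [mem_filter, mem_Ico]
    constructor
    · rintro ⟨⟨h1, h2⟩, h3⟩
      refine ⟨h1, ?_⟩
      have : i + 1 - j ≤ t := Nat.le_findGreatest (by omega) (by
        rw [show j + (i + 1 - j) = i + 1 by omega]; exact h3)
      omega
    · rintro ⟨h1, h2⟩
      refine ⟨⟨h1, by omega⟩, le_trans (hg.strictMono.monotone (by omega)) hP⟩
  · intro h1 h2
    by_contra hcon
    have : 1 ≤ t := Nat.le_findGreatest (by omega) (not_lt.mp hcon)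
    omega

lemma XX_sub (g : ℕ → ℝ) (j t : ℕ) : XX g (j + t) = XX g j + ∑ i ∈ range t, g (j + i) := by
  simp [XX, sum_range_add]

lemma node {α m : ℝ} (hα : 1 < α) (hm : Ex α m) {g : ℕ → ℝ} (hg : Alt g) (j N : ℕ) (hj : j < N)
    (r : ℝ) (hr : 0 ≤ r) :
    ∑ i ∈ (Ico j N).filter (fun i => XX g (i + 1) ≤ XX g j + r), (g i ^ α + m) +
      (if ¬ (g j ≤ r ∧ r < g j + 1) then m else 0) ≤ r ^ α + m := by
  obtain ⟨t, h1, h2, h3, h4⟩ := T_eq hg j N (XX g j + r) (by linarith) hj.le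
  rw [h1, sum_Ico_eq_sum_range, Nat.add_sub_cancel_left]
  rw [XX_sub] at h2
  have hm' := hm
  obtain ⟨m0, m1, m2, m3⟩ := hm
  have hif : (if ¬ (g j ≤ r ∧ r < g j + 1) then m else 0) ≤ m := by split_ifs <;> linarith
  obtain rfl | rfl | h5 : t = 0 ∨ t = 1 ∨ 2 ≤ t := by omega
  · simp only [range_zero, sum_empty]
    linarith [Real.rpow_nonneg hr α]
  · simp only [range_one, sum_singleton, add_zero] at h2 ⊢
    have hgr : g j ≤ r := by linarith
    have h0 : 0 ≤ g j := by linarith [hg.one_le j]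
    by_cases hb : ¬ (g j ≤ r ∧ r < g j + 1)
    · rw [if_pos hb]
      have : g j + 1 ≤ r := by
        by_contra hcon
        exact hb ⟨hgr, not_le.mp hcon⟩
      have h6 := Real.rpow_le_rpow (by linarith) this (by linarith : 0 ≤ α)
      have : g j ^ α + m ≤ (g j + 1) ^ α := by
        rcases hg j with h | h <;> rw [h.1] <;> norm_num <;> linarith
      linarith
    · rw [if_neg hb]
      have h6 := Real.rpow_le_rpow h0 hgr (by linarith : 0 ≤ α)
      linarith
  · have := excess_interval hα hm' hg j t h5
    have h6 := Real.rpow_le_rpow (sum_nonneg fun i _ => by linarith [hg.one_le (j + i)])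
      (by linarith : ∑ i ∈ range t, g (j + i) ≤ r) (by linarith : 0 ≤ α)
    linarith

lemma ext_node {α m : ℝ} (hα : 1 < α) (hm : Ex α m) {g : ℕ → ℝ} (hg : Alt g) (N : ℕ)
    (a E : ℝ) (ha : 2 ≤ a) (hE : 0 ≤ E) :
    a ^ α + ∑ i ∈ (range N).filter (fun i => XX g (i + 1) ≤ E), (g i ^ α + m) ≤ (a + E) ^ α := by
  obtain ⟨t, h1, h2, h3, -⟩ := T_eq hg 0 N E (by simpa) (Nat.zero_le _)
  rw [range_eq_Ico, h1, sum_Ico_eq_sum_range, Nat.add_sub_cancel_left]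
  rw [XX_sub] at h2
  simp only [XX_zero, zero_add] at h2
  have hs : 0 ≤ ∑ i ∈ range t, g i := sum_nonneg fun i _ => by linarith [hg.one_le i]
  have h6 := Real.rpow_le_rpow (by linarith) (by linarith : a + ∑ i ∈ range t, g i ≤ a + E) 
    (by linarith : 0 ≤ α)
  refine le_trans ?_ h6
  obtain rfl | rfl | h5 : t = 0 ∨ t = 1 ∨ 2 ≤ t := by omega
  · simp
  · obtain ⟨m0, m1, m2, m3⟩ := hm
    simp only [range_one, sum_singleton, zero_add]
    rcases hg 0 with h | h <;> rw [h.1]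
    · have := rpow_incr hα (u := 2) (v := a) (d := 1) (by norm_num) ha (by norm_num)
      norm_num at this ⊢
      linarith
    · have := rpow_incr hα (u := 1) (v := a) (d := 2) (by norm_num) (by linarith) (by norm_num)
      norm_num at this
      linarith
  · have := excess_interval hα hm hg 0 t h5
    simp only [zero_add] at this ⊢
    have := Real.add_rpow_le_rpow_add (by linarith : 0 ≤ a) hs hα.le
    linarith

lemma chain {α m : ℝ} (hα : 1 < α) (hm : Ex α m) {g : ℕ → ℝ} (hg : Alt g) (N : ℕ)
    (r : ℕ → ℝ) (hr : ∀ j < N, 0 ≤ r j) (E : ℝ)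
    (hF : ∀ i < N, XX g (i + 1) ≤ E ∨ ∃ j ≤ i, XX g (i + 1) ≤ XX g j + r j) :
    ∑ i ∈ range N, g i ^ α + m * ((range N).filter
      (fun j => ¬ (g j ≤ r j ∧ r j < g j + 1))).card ≤
    ∑ j ∈ range N, r j ^ α +
      ∑ i ∈ (range N).filter (fun i => XX g (i + 1) ≤ E), (g i ^ α + m) := by
  have m0 := hm.1
  have pos : ∀ i, 0 ≤ g i ^ α + m := fun i => by
    have := Real.rpow_nonneg (by linarith [hg.one_le i] : 0 ≤ g i) α
    linarith
  have h1 := sum_le_sum fun j (hj : j ∈ range N) =>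
    node hα hm hg j N (mem_range.mp hj) (r j) (hr j (mem_range.mp hj))
  rw [sum_add_distrib, sum_add_distrib, ← sum_filter, sum_const, sum_const, nsmul_eq_mul,
    nsmul_eq_mul, card_range] at h1
  have h2 : ∑ i ∈ range N, (g i ^ α + m) ≤ 
      ∑ j ∈ range N, ∑ i ∈ (Ico j N).filter (fun i => XX g (i + 1) ≤ XX g j + r j), (g i ^ α + m)
      + ∑ i ∈ (range N).filter (fun i => XX g (i + 1) ≤ E), (g i ^ α + m) := by
    have e : ∑ j ∈ range N, ∑ i ∈ (Ico j N).filter (fun i => XX g (i + 1) ≤ XX g j + r j),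
        (g i ^ α + m) = ∑ i ∈ range N, ∑ j ∈ range N,
          if (j ≤ i ∧ XX g (i + 1) ≤ XX g j + r j) then (g i ^ α + m) else 0 := by
      rw [sum_comm]
      refine sum_congr rfl fun j _ => ?_
      rw [← sum_filter]
      refine sum_congr ?_ fun _ _ => rfl
      ext i
      simp only [mem_filter, mem_Ico, mem_range]
      tauto
    rw [e, sum_filter, ← sum_add_distrib]
    refine sum_le_sum fun i hi => ?_
    have nn : ∀ j, 0 ≤ if (j ≤ i ∧ XX g (i + 1) ≤ XX g j + r j) then (g i ^ α + m) else 0 := by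
      intro j; split_ifs; exacts [pos i, le_rfl]
    rcases hF i (mem_range.mp hi) with h | ⟨j, hj, h⟩
    · rw [if_pos h]
      linarith [sum_nonneg fun j (_ : j ∈ range N) => nn j]
    · have := single_le_sum (fun j _ => nn j) (mem_range.mpr (hj.trans_lt (mem_range.mp hi)))
      rw [if_pos ⟨hj, h⟩] at this
      have : 0 ≤ if XX g (i + 1) ≤ E then g i ^ α + m else 0 := by
        split_ifs; exacts [pos i, le_rfl]
      linarith
  rw [sum_add_distrib, sum_const, nsmul_eq_mul, card_range] at h2
  linarith

/-- crude bound for the free part -/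
lemma free_le {α m : ℝ} (hα : 1 < α) (hm : Ex α m) {g : ℕ → ℝ} (hg : Alt g) (N : ℕ)
    (E : ℝ) (hE : 0 ≤ E) :
    ∑ i ∈ (range N).filter (fun i => XX g (i + 1) ≤ E), (g i ^ α + m) ≤ (2 ^ α + m) * E := by
  obtain ⟨t, h1, h2, h3, -⟩ := T_eq hg 0 N E (by simpa) (Nat.zero_le _)
  rw [range_eq_Ico, h1]
  have h4 : ∀ i ∈ Ico 0 (0 + t), g i ^ α + m ≤ 2 ^ α + m := fun i _ => by
    have := Real.rpow_le_rpow (by linarith [hg.one_le i]) (hg.le_two i) (by linarith : 0 ≤ α)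
    linarith
  have h5 := sum_le_card_nsmul _ _ _ h4
  rw [nsmul_eq_mul] at h5
  simp only [Nat.card_Ico, zero_add, Nat.sub_zero] at h5 h2 ⊢
  have := hg.nat_le t
  have : 0 < (2:ℝ) ^ α := by positivity
  nlinarith [hm.1]

noncomputable def gg (i : ℕ) : ℝ := if Even i then 1 else 2
noncomputable def gr (i : ℕ) : ℝ := if Even i then 2 else 1

lemma alt_gg : Alt gg := fun i => by
  by_cases h : Even i
  · left; simp [gg, h, Nat.even_add_one]
  · right; simp [gg, h, Nat.even_add_one]
lemma alt_gr : Alt gr := fun i => by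
  by_cases h : Even i
  · right; simp [gr, h, Nat.even_add_one]
  · left; simp [gr, h, Nat.even_add_one]

lemma gr_eq (n i : ℕ) (hi : i < 2 * n) : gr i = gg (2 * n - 1 - i) := by
  by_cases h : Even i
  · have : ¬ Even (2 * n - 1 - i) := by grind
    simp [gr, gg, h, this]
  · have : Even (2 * n - 1 - i) := by grind
    simp [gr, gg, h, this]

lemma XX_gr (n i : ℕ) (hi : i ≤ 2 * n) : XX gr i = XX gg (2 * n) - XX gg (2 * n - i) := by
  induction i with
  | zero => simp
  | succ k ih =>
    rw [XX_succ, ih (by omega), gr_eq n k (by omega)]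
    have := XX_succ gg (2 * n - 1 - k)
    rw [show 2 * n - 1 - k + 1 = 2 * n - k by omega] at this
    rw [show 2 * n - (k + 1) = 2 * n - 1 - k by omega]
    linarith

lemma sum_gg (α : ℝ) (n : ℕ) : ∑ i ∈ range (2 * n), gg i ^ α = n * (2 ^ α + 1) := by
  induction n with
  | zero => simp
  | succ k ih =>
    rw [show 2 * (k + 1) = 2 * k + 1 + 1 by ring, sum_range_succ, sum_range_succ, ih]
    have h1 : gg (2 * k) = 1 := by simp [gg]
    have h2 : gg (2 * k + 1) = 2 := by simp [gg]
    rw [h1, h2]; push_cast; simp; ring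

lemma sum_refl (f : ℕ → ℝ) (M N : ℕ) (h : N ≤ M + 1) :
    ∑ j ∈ range N, f (M - j) = ∑ j ∈ Ico (M + 1 - N) (M + 1), f j := by
  induction N with
  | zero => simp
  | succ k ih =>
    rw [sum_range_succ, ih (by omega), sum_eq_sum_Ico_succ_bot (a := M + 1 - (k + 1)) (by omega)]
    rw [show M + 1 - (k + 1) + 1 = M + 1 - k by omega, show M + 1 - (k + 1) = M - k by omega]
    ring

lemma sum_gr (α : ℝ) (n N : ℕ) (h : N ≤ 2 * n) :
    ∑ i ∈ range N, gr i ^ α = ∑ i ∈ Ico (2 * n - N) (2 * n), gg i ^ α := by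
  rcases Nat.eq_zero_or_pos N with rfl | hN
  · simp
  have := sum_refl (fun i => gg i ^ α) (2 * n - 1) N (by omega)
  rw [show 2 * n - 1 + 1 = 2 * n by omega] at this
  rw [← this]
  exact sum_congr rfl fun i hi => by rw [gr_eq n i (by have := mem_range.mp hi; omega)]

def Fwd (E : ℝ) (r : ℕ → ℝ) (i : ℕ) : Prop :=
  XX gg (i + 1) ≤ E ∨ ∃ j ≤ i, XX gg (i + 1) ≤ XX gg j + r j
def Bwd (M : ℕ) (E : ℝ) (r : ℕ → ℝ) (i : ℕ) : Prop :=
  XX gg M - XX gg i ≤ E ∨ ∃ j, i + 1 ≤ j ∧ j ≤ M ∧ XX gg j - XX gg i ≤ r j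

lemma back_chain {α m : ℝ} (hα : 1 < α) (hm : Ex α m) (n N : ℕ) (hN : N ≤ 2 * n)
    (r : ℕ → ℝ) (hr : ∀ j ≤ 2 * n, 0 ≤ r j) (E : ℝ)
    (hB : ∀ i, 2 * n - N ≤ i → i < 2 * n → Bwd (2 * n) E r i) :
    ∑ i ∈ range N, gr i ^ α + m * ((range N).filter
      (fun j => ¬ (gr j ≤ r (2 * n - j) ∧ r (2 * n - j) < gr j + 1))).card ≤
    ∑ j ∈ range N, r (2 * n - j) ^ α +
      ∑ i ∈ (range N).filter (fun i => XX gr (i + 1) ≤ E), (gr i ^ α + m) := by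
  refine chain hα hm alt_gr N (fun j => r (2 * n - j)) (fun j _ => hr _ (by omega)) E ?_
  intro i hi
  rw [XX_gr n (i + 1) (by omega)]
  rcases hB (2 * n - (i + 1)) (by omega) (by omega) with h | ⟨j, h1, h2, h3⟩
  · exact Or.inl h
  · refine Or.inr ⟨2 * n - j, by omega, ?_⟩
    rw [XX_gr n (2 * n - j) (by omega), show 2 * n - (2 * n - j) = j by omega]
    linarith

lemma mixed {α m : ℝ} (hα : 1 < α) (hm : Ex α m) (n : ℕ)
    (r : ℕ → ℝ) (hr : ∀ j ≤ 2 * n, 0 ≤ r j) (E : ℝ) (hE : 0 ≤ E)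
    (h : ∀ j ≤ 2 * n, (∀ i < j, Fwd E r i) ∨ (∀ i, j ≤ i → i < 2 * n → Bwd (2 * n) E r i)) :
    n * (2 ^ α + 1) ≤ ∑ j ∈ range (2 * n + 1), r j ^ α + 2 ^ α + 2 * ((2 ^ α + m) * E) := by
  obtain ⟨K, hK, h1, h2⟩ : ∃ K ≤ 2 * n, (∀ i < K, Fwd E r i) ∧
      (∀ i, K < i → i < 2 * n → Bwd (2 * n) E r i) := by
    by_cases hex : ∃ i, i < 2 * n ∧ ¬ Fwd E r i
    · refine ⟨Nat.find hex, (Nat.find_spec hex).1.le, ?_, ?_⟩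
      · intro i hi
        have := Nat.find_min hex hi
        by_contra hcon
        exact this ⟨hi.trans (Nat.find_spec hex).1, hcon⟩
      · rcases h (Nat.find hex + 1) (Nat.find_spec hex).1 with h' | h'
        · exact absurd (h' _ (Nat.lt_succ_self _)) (Nat.find_spec hex).2
        · exact fun i hi => h' i hi
    · push Not at hex
      exact ⟨2 * n, le_rfl, hex, fun i h1 h2 => by omega⟩
  have c1 := chain hα hm alt_gg K r (fun j hj => hr j (by omega)) E h1
  have c2 := back_chain hα hm n (2 * n - 1 - K) (by omega) r hr E (fun i h3 h4 => h2 i (by omega) h4)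
  have f1 := free_le hα hm alt_gg K E hE
  have f2 := free_le hα hm alt_gr (2 * n - 1 - K) E hE
  rw [sum_gr α n _ (by omega)] at c2
  rw [sum_refl (fun j => r j ^ α) (2 * n) _ (by omega)] at c2
  have p1 := mul_nonneg hm.1 (Nat.cast_nonneg (α := ℝ) ((range K).filter
      (fun j => ¬ (gg j ≤ r j ∧ r j < gg j + 1))).card)
  have p2 := mul_nonneg hm.1 (Nat.cast_nonneg (α := ℝ) ((range (2 * n - 1 - K)).filter
      (fun j => ¬ (gr j ≤ r (2 * n - j) ∧ r (2 * n - j) < gr j + 1))).card)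
  have s1 : ∑ i ∈ range K, gg i ^ α + ∑ i ∈ Ico (2 * n - (2 * n - 1 - K)) (2 * n), gg i ^ α + 2 ^ α
      ≥ n * (2 ^ α + 1) := by
    rw [← sum_gg]
    have h2p : 0 ≤ (2:ℝ) ^ α := by positivity
    rcases eq_or_lt_of_le hK with rfl | hlt
    · rw [show 2 * n - (2 * n - 1 - 2 * n) = 2 * n by omega]
      simp; linarith
    · rw [show 2 * n - (2 * n - 1 - K) = K + 1 by omega, ← sum_range_add_sum_Ico _ hlt,
        sum_range_succ]
      have := Real.rpow_le_rpow (by linarith [alt_gg.one_le K]) (alt_gg.le_two K)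
        (by linarith : 0 ≤ α)
      linarith
  have s2 : ∑ i ∈ range K, r i ^ α + ∑ j ∈ Ico (2 * n + 1 - (2 * n - 1 - K)) (2 * n + 1), r j ^ α
      ≤ ∑ j ∈ range (2 * n + 1), r j ^ α := by
    rw [← sum_range_add_sum_Ico (fun j => r j ^ α) (show K ≤ 2 * n + 1 by omega)]
    have : Ico (2 * n + 1 - (2 * n - 1 - K)) (2 * n + 1) ⊆ Ico K (2 * n + 1) :=
      Ico_subset_Ico (by omega) le_rfl
    have := sum_le_sum_of_subset_of_nonneg (f := fun j => r j ^ α) this (fun i hi _ => 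
      Real.rpow_nonneg (hr i (by have := (mem_Ico.mp hi).2; omega)) α)
    linarith
  linarith
lemma circ_dist_le (L u v : ℝ) : dist (u : AddCircle L) (v : AddCircle L) ≤ |u - v| := by
  rw [dist_eq_norm, ← AddCircle.coe_sub]
  exact QuotientAddGroup.norm_mk_le_norm

lemma circ_dist_cases (L u v r : ℝ) (hL : 0 < L)
    (h : dist (u : AddCircle L) (v : AddCircle L) ≤ r) : |u - v| ≤ r ∨ L - |u - v| ≤ r := by
  rw [dist_eq_norm, ← AddCircle.coe_sub, AddCircle.norm_eq] at h
  generalize round (L⁻¹ * (u - v)) = k at h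
  generalize u - v = x at h ⊢
  have h' := abs_le.mp h
  rcases lt_trichotomy k 0 with hk | rfl | hk
  · have : (k : ℝ) ≤ -1 := by exact_mod_cast (by omega : k ≤ -1)
    right
    have := neg_le_abs x
    nlinarith
  · left; simpa using h
  · have : (1 : ℝ) ≤ k := by exact_mod_cast (by omega : 1 ≤ k)
    right
    have := le_abs_self x
    nlinarith

lemma closed_reach {X : Type*} [MetricSpace X] {P : Finset X} {s : X} {ρ : X → ℝ}
    (hf : Feasible P s ρ) (S : Set X) (hs : s ∈ S)
    (hc : ∀ z ∈ S, z ∈ P → ∀ w ∈ P, dist z w ≤ ρ z → w ∈ S) : ∀ p ∈ P, p ∈ S := by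
  intro p hp
  obtain ⟨k, f, f0, fk, fP, fd⟩ := hf.2 p hp
  have : ∀ i ≤ k, f i ∈ S := by
    intro i
    induction i with
    | zero => intro _; rwa [f0]
    | succ i ih => 
      intro hi
      exact hc _ (ih (by omega)) (fP _ (by omega)) _ (fP _ hi) (fd _ (by omega))
  rw [← fk]; exact this k le_rfl

lemma opt_le {X : Type*} [MetricSpace X] {P : Finset X} {s : X} {ρ : X → ℝ} (α : ℝ)
    (hf : Feasible P s ρ) : opt α P s ≤ cost α P ρ := by
  refine csInf_le ⟨0, ?_⟩ ⟨ρ, hf, rfl⟩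
  rintro c ⟨σ, hσ, rfl⟩
  exact sum_nonneg fun p hp => Real.rpow_nonneg (hσ.1 p hp) α

noncomputable def pt (L a : ℝ) (j : ℕ) : AddCircle L := ((a + XX gg j : ℝ) : AddCircle L)
noncomputable def qpt (L a h : ℝ) (M : ℕ) : AddCircle L := ((a + XX gg M + h : ℝ) : AddCircle L)
noncomputable def PP (L a : ℝ) (M : ℕ) : Finset (AddCircle L) :=
  insert ((0 : ℝ) : AddCircle L) ((range (M + 1)).image (pt L a))

lemma XXnn (j : ℕ) : 0 ≤ XX gg j := (Nat.cast_nonneg _).trans (alt_gg.nat_le j)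
lemma XXle {j k : ℕ} (h : j ≤ k) : XX gg j ≤ XX gg k := alt_gg.strictMono.monotone h

section geom
variable {L a h : ℝ} {M : ℕ} 

lemma edge_pp (ha : 0 < a) (hh : 0 < h) (hL : L = a + XX gg M + 2 * h) {j k : ℕ} (hj : j ≤ M)
    (hk : k ≤ M) {r : ℝ}
    (hd : dist (pt L a j) (pt L a k) ≤ r) : |XX gg j - XX gg k| ≤ r ∨ a + 2 * h ≤ r := by
  have := XXnn M
  rcases circ_dist_cases L _ _ r (by linarith) hd with h1 | h1
  · left; simpa using h1
  · right
    rw [show a + XX gg j - (a + XX gg k) = XX gg j - XX gg k by ring] at h1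
    have : |XX gg j - XX gg k| ≤ XX gg M := abs_le.mpr
      ⟨by linarith [XXnn j, XXle hk], by linarith [XXnn k, XXle hj]⟩
    linarith

lemma edge_sp (ha : 0 < a) (hh : 0 < h) (hL : L = a + XX gg M + 2 * h) {k : ℕ}
    {r : ℝ} (hd : dist ((0 : ℝ) : AddCircle L) (pt L a k) ≤ r) :
    a + XX gg k ≤ r ∨ 2 * h + (XX gg M - XX gg k) ≤ r := by
  have := XXnn M
  have hp : 0 ≤ a + XX gg k := by linarith [XXnn k]
  rcases circ_dist_cases L _ _ r (by linarith) hd with h1 | h1 <;>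
  rw [zero_sub, abs_neg, abs_of_nonneg hp] at h1
  · exact Or.inl h1
  · right; linarith

lemma edge_qp (ha : 0 < a) (hh : 0 < h) (hL : L = a + XX gg M + 2 * h) {k : ℕ} (hk : k ≤ M)
    {r : ℝ} (hd : dist (qpt L a h M) (pt L a k) ≤ r) :
    h + a + XX gg k ≤ r ∨ h + (XX gg M - XX gg k) ≤ r := by
  have := XXnn M
  have hp : 0 ≤ a + XX gg M + h - (a + XX gg k) := by linarith [XXle hk]
  rcases circ_dist_cases L _ _ r (by linarith) hd with h1 | h1 <;>
  rw [abs_of_nonneg hp] at h1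
  · right; linarith
  · left; linarith

lemma edge_sq (ha : 0 < a) (hh : 0 < h) (hL : L = a + XX gg M + 2 * h) 
    {r : ℝ} (hd : dist ((0 : ℝ) : AddCircle L) (qpt L a h M) ≤ r) : h ≤ r := by
  have := XXnn M
  have hp : 0 ≤ a + XX gg M + h := by linarith
  rcases circ_dist_cases L _ _ r (by linarith) hd with h1 | h1 <;>
  rw [zero_sub, abs_neg, abs_of_nonneg hp] at h1 <;> linarith

lemma pt_inj (ha : 0 < a) (hh : 0 < h) (hL : L = a + XX gg M + 2 * h) {j k : ℕ} (hj : j ≤ M)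
    (hk : k ≤ M) (e : pt L a j = pt L a k) : j = k := by
  rcases edge_pp ha hh hL hj hk (r := 0) (by rw [e, dist_self]) with h1 | h1
  · have := abs_eq_zero.mp (le_antisymm h1 (abs_nonneg _))
    exact alt_gg.strictMono.injective (by linarith)
  · linarith
lemma s_ne_pt (ha : 0 < a) (hh : 0 < h) (hL : L = a + XX gg M + 2 * h) {k : ℕ} (hk : k ≤ M) :
    pt L a k ≠ ((0 : ℝ) : AddCircle L) := by
  intro e
  rcases edge_sp ha hh hL (k := k) (r := 0) (by rw [e, dist_self]) with h1 | h1 <;>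
    linarith [XXnn k, XXle hk]
lemma q_ne_pt (ha : 0 < a) (hh : 0 < h) (hL : L = a + XX gg M + 2 * h) {k : ℕ} (hk : k ≤ M) :
    pt L a k ≠ qpt L a h M := by
  intro e
  rcases edge_qp ha hh hL hk (r := 0) (by rw [e, dist_self]) with h1 | h1 <;>
    linarith [XXnn k, XXle hk]
lemma s_ne_q (ha : 0 < a) (hh : 0 < h) (hL : L = a + XX gg M + 2 * h) :
    ((0 : ℝ) : AddCircle L) ≠ qpt L a h M := by
  intro e
  linarith [edge_sq ha hh hL (r := 0) (by rw [e, dist_self])]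
lemma s_notin (ha : 0 < a) (hh : 0 < h) (hL : L = a + XX gg M + 2 * h) :
    ((0 : ℝ) : AddCircle L) ∉ (range (M + 1)).image (pt L a) := by
  simp only [mem_image, mem_range, not_exists, not_and]
  exact fun k hk => s_ne_pt ha hh hL (by omega)
lemma q_notin (ha : 0 < a) (hh : 0 < h) (hL : L = a + XX gg M + 2 * h) :
    qpt L a h M ∉ PP L a M := by
  simp only [PP, mem_insert, mem_image, mem_range, not_or, not_exists, not_and]
  exact ⟨(s_ne_q ha hh hL).symm, fun k hk => q_ne_pt ha hh hL (by omega)⟩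
lemma injOn_pt (ha : 0 < a) (hh : 0 < h) (hL : L = a + XX gg M + 2 * h) :
    Set.InjOn (pt L a) (range (M + 1)) := by
  intro i hi j hj e
  simp at hi hj
  exact pt_inj ha hh hL (by omega) (by omega) e
lemma card_PP (ha : 0 < a) (hh : 0 < h) (hL : L = a + XX gg M + 2 * h) :
    (PP L a M).card = M + 2 := by
  rw [PP, card_insert_of_notMem (s_notin ha hh hL), card_image_of_injOn (injOn_pt ha hh hL),
    card_range]
lemma cost_PP (ha : 0 < a) (hh : 0 < h) (hL : L = a + XX gg M + 2 * h) (α : ℝ)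
    (ρ : AddCircle L → ℝ) : cost α (PP L a M) ρ =
      ρ ((0 : ℝ) : AddCircle L) ^ α + ∑ j ∈ range (M + 1), ρ (pt L a j) ^ α := by
  rw [cost, PP, sum_insert (s_notin ha hh hL), sum_image (injOn_pt ha hh hL)]
lemma cost_PPq (ha : 0 < a) (hh : 0 < h) (hL : L = a + XX gg M + 2 * h) (α : ℝ)
    (ρ : AddCircle L → ℝ) : cost α (insert (qpt L a h M) (PP L a M)) ρ =
      ρ (qpt L a h M) ^ α + (ρ ((0 : ℝ) : AddCircle L) ^ α
        + ∑ j ∈ range (M + 1), ρ (pt L a j) ^ α) := by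
  rw [← cost_PP ha hh hL, cost, sum_insert (q_notin ha hh hL), cost]

lemma mem_s : ((0 : ℝ) : AddCircle L) ∈ PP L a M := mem_insert_self _ _
lemma mem_pt {j : ℕ} (hj : j ≤ M) : pt L a j ∈ PP L a M :=
  mem_insert_of_mem (mem_image_of_mem _ (mem_range.mpr (by omega)))

lemma reach (ha : 0 < a) (hh : 0 < h) (hL : L = a + XX gg M + 2 * h)
    (Q : Finset (AddCircle L)) (hPQ : PP L a M ⊆ Q) (hQ : Q ⊆ insert (qpt L a h M) (PP L a M))
    (ρ : AddCircle L → ℝ) (hf : Feasible Q ((0 : ℝ) : AddCircle L) ρ)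
    (hw : ∀ j ≤ M, ρ (pt L a j) < a + 2 * h) (Ef Eb : ℝ)
    (s1 : ρ ((0 : ℝ) : AddCircle L) ≤ a + Ef) (s2 : ρ ((0 : ℝ) : AddCircle L) ≤ 2 * h + Eb)
    (q1 : qpt L a h M ∈ Q → ρ (qpt L a h M) ≤ h + a + Ef)
    (q2 : qpt L a h M ∈ Q → ρ (qpt L a h M) ≤ h + Eb) :
    ∀ j ≤ M, (0 ≤ Ef ∧ ∀ i < j, Fwd Ef (fun j => ρ (pt L a j)) i) ∨
      (0 ≤ Eb ∧ ∀ i, j ≤ i → i < M → Bwd M Eb (fun j => ρ (pt L a j)) i) := by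
  set S : Set (AddCircle L) := {z | z = ((0 : ℝ) : AddCircle L) ∨ z = qpt L a h M ∨
    ∃ j ≤ M, z = pt L a j ∧ ((0 ≤ Ef ∧ ∀ i < j, Fwd Ef (fun j => ρ (pt L a j)) i) ∨
      (0 ≤ Eb ∧ ∀ i, j ≤ i → i < M → Bwd M Eb (fun j => ρ (pt L a j)) i))} with hS
  have key : ∀ p ∈ Q, p ∈ S := by
    refine closed_reach hf S (Or.inl rfl) ?_
    intro z hz hzQ w hwQ hd
    have hw' := hQ hwQ
    simp only [PP, mem_insert, mem_image, mem_range] at hw'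
    rcases hw' with rfl | rfl | ⟨k, hk, rfl⟩
    · exact Or.inr (Or.inl rfl)
    · exact Or.inl rfl
    have hk : k ≤ M := by omega
    refine Or.inr (Or.inr ⟨k, hk, rfl, ?_⟩)
    have ext1 : XX gg k ≤ Ef → (0 ≤ Ef ∧ ∀ i < k, Fwd Ef (fun j => ρ (pt L a j)) i) := by
      intro h1
      exact ⟨(XXnn k).trans h1, fun i hi => Or.inl ((XXle hi).trans h1)⟩
    have ext2 : XX gg M - XX gg k ≤ Eb →
        (0 ≤ Eb ∧ ∀ i, k ≤ i → i < M → Bwd M Eb (fun j => ρ (pt L a j)) i) := by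
      intro h1
      exact ⟨by linarith [XXle hk], fun i hi _ => Or.inl (by linarith [XXle hi])⟩
    rcases hz with rfl | rfl | ⟨j, hj, rfl, hpre⟩
    · rcases edge_sp ha hh hL hd with h1 | h1
      · exact Or.inl (ext1 (by linarith))
      · exact Or.inr (ext2 (by linarith))
    · have := q1 hzQ
      have := q2 hzQ
      rcases edge_qp ha hh hL hk hd with h1 | h1
      · exact Or.inl (ext1 (by linarith))
      · exact Or.inr (ext2 (by linarith))
    · rcases edge_pp ha hh hL hj hk hd with h1 | h1
      · have h2 := abs_le.mp h1
        rcases hpre with ⟨e, hp⟩ | ⟨e, hp⟩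
        · refine Or.inl ⟨e, fun i hi => ?_⟩
          by_cases hij : i < j
          · exact hp i hij
          · refine Or.inr ⟨j, by omega, ?_⟩
            have := XXle (show i + 1 ≤ k from hi)
            show XX gg (i + 1) ≤ XX gg j + ρ (pt L a j)
            linarith
        · refine Or.inr ⟨e, fun i hi hiM => ?_⟩
          by_cases hij : j ≤ i
          · exact hp i hij hiM
          · refine Or.inr ⟨j, by omega, hj, ?_⟩
            have := XXle hi
            show XX gg j - XX gg i ≤ ρ (pt L a j)
            linarith
      · linarith [hw j hj]
  intro j hj
  rcases key _ (hPQ (mem_pt hj)) with h1 | h1 | ⟨k, hk, e, h1⟩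
  · exact absurd h1 (s_ne_pt ha hh hL hj)
  · exact absurd h1 (q_ne_pt ha hh hL hj)
  · rwa [pt_inj ha hh hL hj hk e]

/-- assignment with prescribed values -/
noncomputable def asg (L a h : ℝ) (M : ℕ) (vs vq : ℝ) (v : ℕ → ℝ) (z : AddCircle L) : ℝ :=
  if z = ((0 : ℝ) : AddCircle L) then vs else if z = qpt L a h M then vq else
    ∑ j ∈ range (M + 1), if z = pt L a j then v j else 0

lemma asg_pt (ha : 0 < a) (hh : 0 < h) (hL : L = a + XX gg M + 2 * h) (vs vq : ℝ) (v : ℕ → ℝ)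
    {k : ℕ} (hk : k ≤ M) : asg L a h M vs vq v (pt L a k) = v k := by
  rw [asg, if_neg (s_ne_pt ha hh hL hk), if_neg (q_ne_pt ha hh hL hk)]
  rw [sum_eq_single k]
  · simp
  · intro b hb hbk
    rw [if_neg]
    intro e
    exact hbk (pt_inj ha hh hL hk (by simp at hb; omega) e).symm
  · intro h1; exact absurd (mem_range.mpr (by omega)) h1
lemma asg_s (vs vq : ℝ) (v : ℕ → ℝ) : asg L a h M vs vq v ((0 : ℝ) : AddCircle L) = vs := by
  simp [asg]
lemma asg_q (ha : 0 < a) (hh : 0 < h) (hL : L = a + XX gg M + 2 * h) (vs vq : ℝ) (v : ℕ → ℝ) :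
    asg L a h M vs vq v (qpt L a h M) = vq := by
  rw [asg, if_neg (s_ne_q ha hh hL).symm, if_pos rfl]

lemma opt_before (ha : 0 < a) (hh : 0 < h) (hL : L = a + XX gg M + 2 * h) (α : ℝ) (hα : 1 < α) :
    opt α (PP L a M) ((0 : ℝ) : AddCircle L) ≤ a ^ α + ∑ i ∈ range M, gg i ^ α := by
  set v : ℕ → ℝ := fun j => if j < M then gg j else 0 with hv
  have hf : Feasible (PP L a M) ((0 : ℝ) : AddCircle L) (asg L a h M a 0 v) := by
    constructor
    · intro p hp
      simp only [PP, mem_insert, mem_image, mem_range] at hp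
      rcases hp with rfl | ⟨k, hk, rfl⟩
      · rw [asg_s]; exact ha.le
      · rw [asg_pt ha hh hL _ _ _ (by omega)]
        simp only [hv]
        split_ifs
        · linarith [alt_gg.one_le k]
        · exact le_rfl
    · intro p hp
      simp only [PP, mem_insert, mem_image, mem_range] at hp
      rcases hp with rfl | ⟨k, hk, rfl⟩
      · exact ⟨0, fun _ => ((0 : ℝ) : AddCircle L), rfl, rfl, fun _ _ => mem_s, by simp⟩
      · refine ⟨k + 1, fun i => if i = 0 then ((0 : ℝ) : AddCircle L) else pt L a (i - 1),
          by simp, by simp, ?_, ?_⟩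
        · intro i hi
          dsimp only
          split_ifs
          · exact mem_s
          · exact mem_pt (by omega)
        · intro i hi
          dsimp only
          rw [if_neg (Nat.succ_ne_zero i)]
          split_ifs with h0
          · subst h0
            rw [asg_s]
            refine (circ_dist_le _ _ _).trans ?_
            simp [abs_of_pos ha]
          · rw [asg_pt ha hh hL _ _ _ (by omega)]
            have : v (i - 1) = gg (i - 1) := if_pos (by omega)
            rw [this]
            refine (circ_dist_le _ _ _).trans ?_
            have e := XX_succ gg (i - 1)
            rw [show i - 1 + 1 = i by omega] at e
            rw [show i + 1 - 1 = i by omega, e, abs_le]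
            have := alt_gg.one_le (i - 1)
            constructor <;> linarith
  refine (opt_le α hf).trans ?_
  rw [cost_PP ha hh hL, asg_s, sum_range_succ]
  rw [asg_pt ha hh hL _ _ _ le_rfl]
  have : v M = 0 := if_neg (lt_irrefl _)
  rw [this, Real.zero_rpow (by linarith), add_zero]
  refine le_of_eq ?_
  congr 1
  refine sum_congr rfl fun i hi => ?_
  have hi := mem_range.mp hi
  rw [asg_pt ha hh hL _ _ _ hi.le]
  congr 1
  exact if_pos hi

lemma opt_after (ha : 0 < a) (hh : 0 < h) (hL : L = a + XX gg M + 2 * h) (α : ℝ) (hα : 1 < α) :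
    opt α (insert (qpt L a h M) (PP L a M)) ((0 : ℝ) : AddCircle L) ≤
      2 * h ^ α + ∑ i ∈ range M, gg i ^ α := by
  set v : ℕ → ℝ := fun j => if 0 < j then gg (j - 1) else 0 with hv
  have hf : Feasible (insert (qpt L a h M) (PP L a M)) ((0 : ℝ) : AddCircle L)
      (asg L a h M h h v) := by
    constructor
    · intro p hp
      simp only [PP, mem_insert, mem_image, mem_range] at hp
      rcases hp with rfl | rfl | ⟨k, hk, rfl⟩
      · rw [asg_q ha hh hL]; exact hh.le
      · rw [asg_s]; exact hh.le
      · rw [asg_pt ha hh hL _ _ _ (by omega)]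
        simp only [hv]
        split_ifs
        · linarith [alt_gg.one_le (k - 1)]
        · exact le_rfl
    · have hsq : dist ((0 : ℝ) : AddCircle L) (qpt L a h M) ≤ h := by
        have : ((0 : ℝ) : AddCircle L) = ((L : ℝ) : AddCircle L) := by
          rw [AddCircle.coe_period]; rfl
        rw [this]
        refine (circ_dist_le _ _ _).trans ?_
        rw [abs_le]; constructor <;> linarith
      have path : ∀ k ≤ M + 2, ∃ (m : ℕ) (f : ℕ → AddCircle L), f 0 = ((0 : ℝ) : AddCircle L) ∧
          f m = (if k = 0 then ((0 : ℝ) : AddCircle L) else if k = 1 then qpt L a h M else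
            pt L a (M + 2 - k)) ∧ (∀ i ≤ m, f i ∈ insert (qpt L a h M) (PP L a M)) ∧
            ∀ i < m, dist (f i) (f (i + 1)) ≤ (asg L a h M h h v) (f i) := by
        intro k hk
        refine ⟨k, fun k => (if k = 0 then ((0 : ℝ) : AddCircle L) else if k = 1 then
          qpt L a h M else pt L a (M + 2 - k)), by simp, rfl, ?_, ?_⟩
        · intro i hi
          dsimp only
          split_ifs
          · exact mem_insert_of_mem mem_s
          · exact mem_insert_self _ _
          · exact mem_insert_of_mem (mem_pt (by omega))
        · intro i hi
          obtain rfl | rfl | h2 : i = 0 ∨ i = 1 ∨ 2 ≤ i := by omega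
          · simp only [if_true, zero_add, one_ne_zero, if_false]
            rw [asg_s]; exact hsq
          · norm_num
            rw [asg_q ha hh hL]
            refine (circ_dist_le _ _ _).trans ?_
            rw [abs_le]; constructor <;> linarith
          · simp only [show i ≠ 0 by omega, show i ≠ 1 by omega, show i + 1 ≠ 0 by omega,
              show i + 1 ≠ 1 by omega, if_false]
            rw [asg_pt ha hh hL _ _ _ (by omega)]
            have : v (M + 2 - i) = gg (M + 2 - i - 1) := if_pos (by omega)
            rw [this]
            refine (circ_dist_le _ _ _).trans ?_
            have e := XX_succ gg (M + 2 - i - 1)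
            rw [show M + 2 - i - 1 + 1 = M + 2 - i by omega] at e
            rw [show M + 2 - (i + 1) = M + 2 - i - 1 by omega, e, abs_le]
            have := alt_gg.one_le (M + 2 - i - 1)
            constructor <;> linarith
      intro p hp
      simp only [PP, mem_insert, mem_image, mem_range] at hp
      rcases hp with rfl | rfl | ⟨k, hk, rfl⟩
      · simpa using path 1 (by omega)
      · simpa using path 0 (by omega)
      · have := path (M + 2 - k) (by omega)
        rwa [if_neg (by omega), if_neg (by omega), show M + 2 - (M + 2 - k) = k by omega] at this
  refine (opt_le α hf).trans ?_
  rw [cost_PPq ha hh hL, asg_s, asg_q ha hh hL, sum_range_succ']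
  rw [asg_pt ha hh hL _ _ _ (Nat.zero_le _)]
  have : v 0 = 0 := if_neg (lt_irrefl _)
  rw [this, Real.zero_rpow (by linarith), add_zero]
  have : ∑ k ∈ range M, asg L a h M h h v (pt L a (k + 1)) ^ α = ∑ i ∈ range M, gg i ^ α := by
    refine sum_congr rfl fun i hi => ?_
    have hi := mem_range.mp hi
    rw [asg_pt ha hh hL _ _ _ hi]
    congr 1
  rw [this]
  linarith

end geom
section bounds
variable {α m a h L : ℝ} {n : ℕ}

lemma before_bound (hα : 1 < α) (hm : Ex α m) (ha : 2 ≤ a) (hh : 2 ≤ h)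
    (hL : L = a + XX gg (2 * n) + 2 * h) (B : ℝ) (hwr : B < a ^ α + (2 * h) ^ α)
    (hmix : ∀ R, 2 * h ≤ R → R ^ α ≤ B →
      B + 2 ^ α + 2 * ((2 ^ α + m) * R) < R ^ α + n * (2 ^ α + 1))
    (ρ : AddCircle L → ℝ) (hf : Feasible (PP L a (2 * n)) ((0 : ℝ) : AddCircle L) ρ)
    (hB : cost α (PP L a (2 * n)) ρ ≤ B) :
    a ^ α + n * (2 ^ α + 1) + m * ((range (2 * n)).filter
      (fun j => ¬ (gg j ≤ ρ (pt L a j) ∧ ρ (pt L a j) < gg j + 1))).card ≤ B := by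
  have ha0 : 0 < a := by linarith
  have hh0 : 0 < h := by linarith
  rw [cost_PP ha0 hh0 hL] at hB
  set R := ρ ((0 : ℝ) : AddCircle L) with hR
  have r0 : ∀ j ≤ 2 * n, 0 ≤ ρ (pt L a j) := fun j hj => hf.1 _ (mem_pt hj)
  have R0 : 0 ≤ R := hf.1 _ mem_s
  have nn : ∀ j ∈ range (2 * n + 1), 0 ≤ ρ (pt L a j) ^ α := fun j hj =>
    Real.rpow_nonneg (r0 j (by have := mem_range.mp hj; omega)) α
  have Rα := Real.rpow_nonneg R0 α
  have hw : ∀ j ≤ 2 * n, ρ (pt L a j) < a + 2 * h := by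
    intro j hj
    by_contra hcon
    have h1 := Real.rpow_le_rpow (by linarith) (not_lt.mp hcon) (by linarith : 0 ≤ α)
    have h2 := Real.add_rpow_le_rpow_add ha0.le (by linarith : 0 ≤ 2 * h) hα.le
    have h3 := single_le_sum nn (mem_range.mpr (by omega : j < 2 * n + 1))
    linarith
  have sum0 := sum_nonneg nn
  by_cases hb : 2 * h ≤ R
  · exfalso
    have h1 := reach ha0 hh0 hL _ subset_rfl (subset_insert _ _) ρ hf hw R R (by linarith)
      (by linarith) (fun hq => absurd hq (q_notin ha0 hh0 hL))
      (fun hq => absurd hq (q_notin ha0 hh0 hL))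
    have h2 := mixed hα hm n (fun j => ρ (pt L a j)) r0 R R0
      (fun j hj => (h1 j hj).imp (fun h => h.2) (fun h => h.2))
    have h3 := hmix R hb (by linarith)
    linarith
  · have h1 := reach ha0 hh0 hL _ subset_rfl (subset_insert _ _) ρ hf hw (R - a) (R - 2 * h)
      (by linarith) (by linarith) (fun hq => absurd hq (q_notin ha0 hh0 hL))
      (fun hq => absurd hq (q_notin ha0 hh0 hL)) (2 * n) le_rfl
    rcases h1 with ⟨e, h1⟩ | ⟨e, h1⟩
    swap
    · linarith
    have h2 := chain hα hm alt_gg (2 * n) (fun j => ρ (pt L a j)) (fun j hj => r0 j hj.le) _ h1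
    have h3 := ext_node hα hm alt_gg (2 * n) a (R - a) ha e
    rw [show a + (R - a) = R by ring] at h3
    rw [sum_gg] at h2
    rw [sum_range_succ] at hB
    have := nn (2 * n) (by simp)
    linarith

lemma after_bound (hα : 1 < α) (hm : Ex α m) (ha : 2 ≤ a) (hh : 2 ≤ h) (hah : h ≤ a)
    (hab : a ≤ 2 * h)
    (hL : L = a + XX gg (2 * n) + 2 * h) (B : ℝ) (hwr : B < a ^ α + (2 * h) ^ α)
    (hmix : ∀ R, a ≤ R → R ^ α ≤ B →
      B + 2 ^ α + 2 * ((2 ^ α + m) * R) < R ^ α + n * (2 ^ α + 1))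
    (ρ : AddCircle L → ℝ)
    (hf : Feasible (insert (qpt L a h (2 * n)) (PP L a (2 * n))) ((0 : ℝ) : AddCircle L) ρ)
    (hB : cost α (insert (qpt L a h (2 * n)) (PP L a (2 * n))) ρ ≤ B) :
    2 * h ^ α + n * (2 ^ α + 1) + m * ((range (2 * n)).filter
      (fun j => ¬ (gr j ≤ ρ (pt L a (2 * n - j)) ∧ ρ (pt L a (2 * n - j)) < gr j + 1))).card
      ≤ B := by
  have ha0 : 0 < a := by linarith
  have hh0 : 0 < h := by linarith
  rw [cost_PPq ha0 hh0 hL] at hB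
  set R := ρ ((0 : ℝ) : AddCircle L) with hR
  set T := ρ (qpt L a h (2 * n)) with hT
  have r0 : ∀ j ≤ 2 * n, 0 ≤ ρ (pt L a j) := fun j hj =>
    hf.1 _ (mem_insert_of_mem (mem_pt hj))
  have R0 : 0 ≤ R := hf.1 _ (mem_insert_of_mem mem_s)
  have T0 : 0 ≤ T := hf.1 _ (mem_insert_self _ _)
  have nn : ∀ j ∈ range (2 * n + 1), 0 ≤ ρ (pt L a j) ^ α := fun j hj =>
    Real.rpow_nonneg (r0 j (by have := mem_range.mp hj; omega)) α
  have Rα := Real.rpow_nonneg R0 α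
  have Tα := Real.rpow_nonneg T0 α
  have hw : ∀ j ≤ 2 * n, ρ (pt L a j) < a + 2 * h := by
    intro j hj
    by_contra hcon
    have h1 := Real.rpow_le_rpow (by linarith) (not_lt.mp hcon) (by linarith : 0 ≤ α)
    have h2 := Real.add_rpow_le_rpow_add ha0.le (by linarith : 0 ≤ 2 * h) hα.le
    have h3 := single_le_sum nn (mem_range.mpr (by omega : j < 2 * n + 1))
    linarith
  have sum0 := sum_nonneg nn
  by_cases hb : a ≤ R ∨ h + a ≤ T
  · exfalso
    have hmax : max R T ^ α ≤ R ^ α + T ^ α := by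
      rcases max_choice R T with h | h <;> rw [h] <;> linarith
    have hm1 := le_max_left R T
    have hm2 := le_max_right R T
    have h1 := reach ha0 hh0 hL _ (subset_insert _ _) subset_rfl ρ hf hw (max R T) (max R T)
      (by linarith) (by linarith) (fun _ => by linarith) (fun _ => by linarith)
    have h2 := mixed hα hm n (fun j => ρ (pt L a j)) r0 (max R T) (by linarith)
      (fun j hj => (h1 j hj).imp (fun h => h.2) (fun h => h.2))
    have h3 := hmix (max R T) (by rcases hb with h | h <;> linarith) (by linarith)
    linarith
  · push Not at hb
    have hRh : h ≤ R := by
      by_contra hcon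
      have := closed_reach hf {((0 : ℝ) : AddCircle L)} rfl (by
        rintro z rfl _ w hw hd
        simp only [PP, mem_insert, mem_image, mem_range] at hw
        rcases hw with rfl | rfl | ⟨k, hk, rfl⟩
        · exact absurd (edge_sq ha0 hh0 hL hd) hcon
        · rfl
        · exfalso
          have := XXle (show k ≤ 2 * n by omega)
          have := XXnn k
          rcases edge_sp ha0 hh0 hL hd with h1 | h1 <;> linarith) _ (mem_insert_self _ _)
      exact s_ne_q ha0 hh0 hL this.symm
    have h1 := reach ha0 hh0 hL _ (subset_insert _ _) subset_rfl ρ hf hw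
      (max (R - a) (T - h - a)) (max (R - 2 * h) (T - h))
      (by linarith [le_max_left (R - a) (T - h - a)])
      (by linarith [le_max_left (R - 2 * h) (T - h)])
      (fun _ => by linarith [le_max_right (R - a) (T - h - a)])
      (fun _ => by linarith [le_max_right (R - 2 * h) (T - h)]) 0 (Nat.zero_le _)
    rcases h1 with ⟨e, h1⟩ | ⟨e, h1⟩
    · rcases le_max_iff.mp e with h | h <;> linarith
    have e2 : 0 ≤ T - h := by
      rcases le_max_iff.mp e with h | h <;> linarith
    rw [max_eq_right (by linarith)] at h1
    have h2 := back_chain hα hm n (2 * n) le_rfl (fun j => ρ (pt L a j)) r0 _ 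
      (fun i _ hi => h1 i (Nat.zero_le _) hi)
    have h3 := ext_node hα hm alt_gr (2 * n) h (T - h) hh e2
    rw [show h + (T - h) = T by ring] at h3
    rw [sum_gr α n _ le_rfl, Nat.sub_self, ← range_eq_Ico, sum_gg] at h2
    rw [sum_refl (fun j => ρ (pt L a j) ^ α) (2 * n) _ (by omega)] at h2
    have h4 : ∑ j ∈ Ico (2 * n + 1 - 2 * n) (2 * n + 1), ρ (pt L a j) ^ α ≤
        ∑ j ∈ range (2 * n + 1), ρ (pt L a j) ^ α := 
      sum_le_sum_of_subset_of_nonneg (by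
        rw [range_eq_Ico]; exact Ico_subset_Ico (Nat.zero_le _) le_rfl) (fun i hi _ => nn i hi)
    have h5 := Real.rpow_le_rpow hh0.le hRh (by linarith : 0 ≤ α)
    linarith

lemma count (ha : 0 < a) (hh : 0 < h)
    (hL : L = a + XX gg (2 * n) + 2 * h) (ρ ρ' : AddCircle L → ℝ) :
    2 * n - 1 ≤ ({p ∈ insert (qpt L a h (2 * n)) (PP L a (2 * n) : Set (AddCircle L)) |
                ρ' p ≠ Function.update ρ (qpt L a h (2 * n)) 0 p}.ncard) +
      ((range (2 * n)).filter
        (fun j => ¬ (gg j ≤ ρ (pt L a j) ∧ ρ (pt L a j) < gg j + 1))).card +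
      ((range (2 * n)).filter (fun j =>
        ¬ (gr j ≤ ρ' (pt L a (2 * n - j)) ∧ ρ' (pt L a (2 * n - j)) < gr j + 1))).card := by
  set B1 := ((range (2 * n)).filter
        (fun j => ¬ (gg j ≤ ρ (pt L a j) ∧ ρ (pt L a j) < gg j + 1))) with hB1
  set B2 := ((range (2 * n)).filter (fun j =>
        ¬ (gr j ≤ ρ' (pt L a (2 * n - j)) ∧ ρ' (pt L a (2 * n - j)) < gr j + 1))) with hB2
  set G := (Ico 1 (2 * n)).filter (fun j => ρ (pt L a j) ≠ ρ' (pt L a j)) with hG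
  have h1 : G.card ≤ {p ∈ insert (qpt L a h (2 * n)) (PP L a (2 * n) : Set (AddCircle L)) |
                ρ' p ≠ Function.update ρ (qpt L a h (2 * n)) 0 p}.ncard := by
    have e : (G.image (pt L a)).card = G.card := card_image_of_injOn (by
      refine (injOn_pt ha hh hL).mono ?_
      intro i hi
      simp only [hG, coe_filter, mem_Ico, Set.mem_ofPred_eq, coe_range, Set.mem_Iio] at hi ⊢
      omega)
    rw [← e, ← Set.ncard_coe_finset]
    refine Set.ncard_le_ncard ?_ ?_
    · intro z hz
      simp only [coe_image, Set.mem_image, hG, mem_coe, mem_filter, mem_Ico] at hz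
      obtain ⟨j, ⟨⟨j1, j2⟩, j3⟩, rfl⟩ := hz
      refine ⟨Or.inr (mem_coe.mpr (mem_pt j2.le)), ?_⟩
      rw [Function.update_of_ne (q_ne_pt ha hh hL j2.le)]
      exact j3.symm
    · refine Set.Finite.subset ((PP L a (2 * n)).finite_toSet.insert _) (Set.sep_subset _ _)
  have h2 : Ico 1 (2 * n) ⊆ G ∪ B1 ∪ B2.image (fun j => 2 * n - j) := by
    intro j hj
    obtain ⟨j1, j2⟩ := mem_Ico.mp hj
    by_contra hcon
    simp only [mem_union, not_or] at hcon
    obtain ⟨⟨c1, c2⟩, c3⟩ := hcon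
    simp only [hG, mem_filter, hj, true_and, not_not] at c1
    simp only [hB1, mem_filter, mem_range, j2, true_and, not_not] at c2
    have c4 : 2 * n - j ∉ B2 := fun hh => c3 (mem_image.mpr ⟨_, hh, by omega⟩)
    simp only [hB2, mem_filter, mem_range, show 2 * n - j < 2 * n by omega, true_and,
      not_not] at c4
    rw [show 2 * n - (2 * n - j) = j by omega, gr_eq n _ (by omega),
      show 2 * n - 1 - (2 * n - j) = j - 1 by omega, ← c1] at c4
    have := alt_gg (j - 1)
    rw [show j - 1 + 1 = j by omega] at this
    rcases this with ⟨e1, e2⟩ | ⟨e1, e2⟩ <;> rw [e1] at c4 <;> rw [e2] at c2 <;> linarith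
  have h3 := card_le_card h2
  have h4 := card_union_le (G ∪ B1) (B2.image (fun j => 2 * n - j))
  have h5 := card_union_le G B1
  have h6 := card_image_le (s := B2) (f := fun j => 2 * n - j)
  rw [Nat.card_Ico] at h3
  omega

end bounds

lemma big_N {α : ℝ} (hα : 1 < α) (c0 C δ : ℝ) (hc : 0 ≤ c0) (hC : 0 < C) (hδ : 0 < δ) :
    ∃ Y : ℝ, ∀ y, Y ≤ y → ∀ R, 0 ≤ R → R ^ α ≤ 4 * y → c0 + C * R < δ * y := by
  set K := 8 * C / δ with hK
  have K0 : 0 < K := by positivity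
  set R0 := K ^ (1 / (α - 1)) with hR0
  have R00 : 0 < R0 := Real.rpow_pos_of_pos K0 _
  refine ⟨2 * (c0 + C * R0) / δ + 1, fun y hy R hR hRy => ?_⟩
  have h1 : K * R ≤ K * R0 + 4 * y := by
    have y0 : 0 ≤ 4 * y := (Real.rpow_nonneg hR α).trans hRy
    by_cases h : R ≤ R0
    · nlinarith
    · have hR' : 0 < R := by linarith
      have : K ≤ R ^ (α - 1) := by
        have h2 := Real.rpow_le_rpow R00.le (not_le.mp h).le (by linarith : 0 ≤ α - 1)
        rwa [hR0, ← Real.rpow_mul K0.le, one_div, inv_mul_cancel₀ (by linarith),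
          Real.rpow_one] at h2
      have h3 : R ^ α = R ^ (α - 1) * R := by
        rw [← Real.rpow_add_one hR'.ne']; congr 1; ring
      have : K * R ≤ R ^ α := by rw [h3]; exact mul_le_mul_of_nonneg_right this hR
      have : 0 ≤ K * R0 := by positivity
      linarith
  have h2 : K * δ = 8 * C := by rw [hK]; field_simp
  have h3 : 2 * (c0 + C * R0) < δ * y := by
    have : 2 * (c0 + C * R0) / δ < y := by linarith
    rw [div_lt_iff₀ hδ] at this
    linarith
  have h4 : 8 * C * R ≤ 8 * C * R0 + 4 * y * δ := by
    rw [← h2]; nlinarith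
  linarith

lemma cAlpha_facts (α : ℝ) (hα : 1 < α) : ∃ m, 0 < m ∧ Ex α m ∧ 1 < cAlpha α ∧
    (cAlpha α - 1) * (3 * 2 ^ α + 2) ≤ 2 ^ (α - 1) - 1 ∧
    (cAlpha α - 1) * (4 * (2 ^ α + 1)) ≤ m := by
  set m : ℝ := min (2 ^ α - 1) (min ((3 ^ α - 2 ^ α - 1) / 2) ((4 ^ α - 2 ^ α - 2) / 3)) with hm
  have h1 : (1:ℝ) < 2 ^ (α - 1) := Real.one_lt_rpow (by norm_num) (by linarith)
  have h2 : (2:ℝ) ^ α = 2 * 2 ^ (α - 1) := by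
    rw [Real.rpow_sub (by norm_num), Real.rpow_one]; ring
  have h3 : (3:ℝ) ^ α = 3 * 3 ^ (α - 1) := by
    rw [Real.rpow_sub (by norm_num), Real.rpow_one]; ring
  have h4 : (4:ℝ) ^ α = 2 ^ α * 2 ^ α := by
    rw [← Real.mul_rpow (by norm_num) (by norm_num)]; norm_num
  have h5 : (2:ℝ) ^ (α - 1) < 3 ^ (α - 1) :=
    Real.rpow_lt_rpow (by norm_num) (by norm_num) (by linarith)
  have h6 : (2:ℝ) ^ (α - 4) = 2 ^ (α - 1) / 8 := by
    rw [show α - 4 = α - 1 - 3 by ring, Real.rpow_sub (by norm_num)]; norm_num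
  have m1 : m ≤ 2 ^ α - 1 := min_le_left _ _
  have m2 : m ≤ (3 ^ α - 2 ^ α - 1) / 2 := (min_le_right _ _).trans (min_le_left _ _)
  have m3 : m ≤ (4 ^ α - 2 ^ α - 2) / 3 := (min_le_right _ _).trans (min_le_right _ _)
  have m0 : 0 < m := by
    refine lt_min (by linarith) (lt_min (by linarith) ?_)
    rw [h4]; nlinarith
  have c1 : cAlpha α ≤ 1 + (2 ^ (α - 1) - 1) / (3 * 2 ^ α + 2) :=
    (min_le_right _ _).trans (min_le_left _ _)
  have c2 : cAlpha α ≤ 1 + m / (4 * (2 ^ α + 1)) :=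
    (min_le_right _ _).trans (min_le_right _ _)
  have p1 : (0:ℝ) < 3 * 2 ^ α + 2 := by positivity
  have p2 : (0:ℝ) < 4 * (2 ^ α + 1) := by positivity
  refine ⟨m, m0, ⟨m0.le, m1, by linarith, by linarith⟩, ?_, ?_, ?_⟩
  · refine lt_min (by linarith) (lt_min ?_ ?_)
    · have : (0:ℝ) < (2 ^ (α - 1) - 1) / (3 * 2 ^ α + 2) := div_pos (by linarith) p1
      linarith
    · have : 0 < m / (4 * (2 ^ α + 1)) := div_pos m0 p2
      linarith
  · rw [← le_div_iff₀ p1]; linarith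
  · rw [← le_div_iff₀ p2]; linarith

set_option maxHeartbeats 1000000 in
/-- The dynamic broadcast range-assignment problem on the circle admits no
stable approximation scheme: `c_α > 1`, and for all large `n` there is an instance of `2n+2`
points on a circle and an insertion forcing any `c_α`-approximate update algorithm to modify
more than `2n/3 - 1` ranges. -/
theorem no_sas_on_circle (α : ℝ) (hα : 1 < α) :
    1 < cAlpha α ∧
    ∃ N : ℕ, ∀ n : ℕ, N ≤ n →
      ∃ L : ℝ, 0 < L ∧
      ∃ (P : Finset (AddCircle L)) (s q : AddCircle L),
        s ∈ P ∧ q ∉ P ∧ P.card = 2 * n + 2 ∧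
        ∀ ρ ρ' : AddCircle L → ℝ,
          Feasible P s ρ → cost α P ρ ≤ cAlpha α * opt α P s →
          Feasible (insert q P) s ρ' →
          cost α (insert q P) ρ' ≤ cAlpha α * opt α (insert q P) s →
          2 * (n : ℝ) / 3 - 1 <
            (({p ∈ insert q (P : Set (AddCircle L)) |
                ρ' p ≠ Function.update ρ q 0 p}.ncard : ℝ)) := by
  obtain ⟨m, m0, hm, hc1, hc2, hc3⟩ := cAlpha_facts α hα
  refine ⟨hc1, ?_⟩
  obtain ⟨ε, hε⟩ : ∃ ε, ε = cAlpha α - 1 := ⟨_, rfl⟩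
  have hcε : cAlpha α = 1 + ε := by linarith
  rw [← hε] at hc2 hc3
  have ε0 : 0 < ε := by linarith
  obtain ⟨k, hk⟩ : ∃ k : ℝ, k = 2 ^ (α - 1) := ⟨_, rfl⟩
  have k1 : 1 < k := by rw [hk]; exact Real.one_lt_rpow (by norm_num) (by linarith)
  have h2α : (2:ℝ) ^ α = 2 * k := by
    rw [hk, Real.rpow_sub (by norm_num), Real.rpow_one]; ring
  rw [← hk, h2α] at hc2
  have ε6 : ε < 1 / 6 := by nlinarith
  obtain ⟨t, ht1, ht2⟩ : ∃ t, (1 + 2 * ε) / k < t ∧ t < (1 - ε) / (1 + ε) := by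
    refine exists_between ?_
    rw [div_lt_div_iff₀ (by linarith) (by linarith)]
    nlinarith
  rw [div_lt_iff₀ (by linarith)] at ht1
  rw [lt_div_iff₀ (by linarith)] at ht2
  have t0 : 0 < t := by
    by_contra hcon
    nlinarith
  have t1 : t < 1 := by nlinarith
  obtain ⟨δ, hδ⟩ : ∃ δ, δ = min (t * k - 1 - 2 * ε) (1 - t - ε * (1 + t)) := ⟨_, rfl⟩
  have δ0 : 0 < δ := by
    rw [hδ]; exact lt_min (by linarith) (by linarith)
  have δ1 : δ ≤ t * k - 1 - 2 * ε := hδ ▸ min_le_left _ _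
  have δ2 : δ ≤ 1 - t - ε * (1 + t) := hδ ▸ min_le_right _ _
  have h2p : (0:ℝ) < 2 ^ α := by positivity
  obtain ⟨Y, hY⟩ := big_N hα (2 ^ α) (2 * (2 ^ α + m)) δ h2p.le (by linarith) δ0
  obtain ⟨N, hN⟩ := exists_nat_ge (max Y (max 1 (2 / t)))
  refine ⟨N, fun n hn => ?_⟩
  have hn' : (N : ℝ) ≤ n := by exact_mod_cast hn
  have nY : Y ≤ n := (le_max_left _ _).trans (hN.trans hn')
  have n1 : (1:ℝ) ≤ n := ((le_max_left _ _).trans (le_max_right _ _)).trans (hN.trans hn')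
  have nt : 2 / t ≤ n := ((le_max_right _ _).trans (le_max_right _ _)).trans (hN.trans hn')
  rw [div_le_iff₀ t0] at nt
  obtain ⟨y, hy⟩ : ∃ y : ℝ, y = n * (2 ^ α + 1) := ⟨_, rfl⟩
  have yn : (n:ℝ) ≤ y := by rw [hy]; nlinarith
  have y0 : 0 < y := by linarith
  have y2 : (2:ℝ) ^ α ≤ y := by rw [hy]; nlinarith
  have y3 : (2:ℝ) ^ α ≤ t * y / 2 := by rw [hy]; nlinarith
  have hYy := hY y (nY.trans yn)
  have α0 : α ≠ 0 := by linarith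
  set a := y ^ (1 / α) with ha
  set h := (t * y / 2) ^ (1 / α) with hh
  have aα : a ^ α = y := by
    rw [ha, ← Real.rpow_mul y0.le, one_div, inv_mul_cancel₀ α0, Real.rpow_one]
  have hα' : h ^ α = t * y / 2 := by
    rw [hh, ← Real.rpow_mul (by positivity), one_div, inv_mul_cancel₀ α0, Real.rpow_one]
  have a0 : 0 ≤ a := Real.rpow_nonneg y0.le _
  have h0 : 0 ≤ h := Real.rpow_nonneg (by positivity) _
  have αp : 0 < α := by linarith
  have a2 : 2 ≤ a := by
    rw [← Real.rpow_le_rpow_iff (by norm_num) a0 αp, aα]; exact y2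
  have h2 : 2 ≤ h := by
    rw [← Real.rpow_le_rpow_iff (by norm_num) h0 αp, hα']; exact y3
  have hah : h ≤ a := by
    rw [← Real.rpow_le_rpow_iff h0 a0 αp, hα', aα]; nlinarith
  have bα : (2 * h) ^ α = t * k * y := by
    rw [Real.mul_rpow (by norm_num) h0, hα', h2α]; ring
  have hab : a ≤ 2 * h := by
    rw [← Real.rpow_le_rpow_iff a0 (by linarith) αp, bα, aα]; nlinarith
  clear_value a h
  have ha0 : 0 < a := by linarith
  have hh0 : 0 < h := by linarith
  obtain ⟨L, hL⟩ : ∃ L, L = a + XX gg (2 * n) + 2 * h := ⟨_, rfl⟩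
  refine ⟨L, by linarith [XXnn (2 * n)], PP L a (2 * n), ((0 : ℝ) : AddCircle L),
    qpt L a h (2 * n), mem_s, q_notin ha0 hh0 hL, card_PP ha0 hh0 hL, ?_⟩
  intro ρ ρ' hf hcost hf' hcost'
  have ob := opt_before ha0 hh0 hL α hα
  have oa := opt_after ha0 hh0 hL α hα
  rw [sum_gg, ← hy, aα] at ob
  rw [sum_gg, ← hy, hα'] at oa
  rw [hcε] at hcost hcost'
  have e1 := mul_le_mul_of_nonneg_right δ1 y0.le
  have e2 := mul_le_mul_of_nonneg_right δ2 y0.le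
  have e0 := mul_pos δ0 y0
  have e3 := mul_lt_mul_of_pos_right ε6 y0
  have e4 := mul_lt_mul_of_pos_right t1 y0
  have e5 := mul_lt_mul_of_pos_right t1 (mul_pos ε0 y0)
  have e6 := mul_pos ε0 y0
  have B1 := before_bound hα hm a2 h2 hL ((1 + ε) * (y + y)) 
    (by rw [aα, bα]; linarith) (by
      intro R hR hRB
      have h3 := hYy R (by linarith) (by linarith)
      have h4 := Real.rpow_le_rpow (by linarith) hR αp.le
      rw [bα] at h4
      rw [← hy]
      linarith) ρ hf (hcost.trans (mul_le_mul_of_nonneg_left ob (by linarith)))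
  have B2 := after_bound hα hm a2 h2 hah hab hL ((1 + ε) * (2 * (t * y / 2) + y)) 
    (by rw [aα, bα]; linarith) (by
      intro R hR hRB
      have h3 := hYy R (by linarith) (by linarith)
      have h4 := Real.rpow_le_rpow (by linarith) hR αp.le
      rw [aα] at h4
      rw [← hy]
      linarith) ρ' hf' (hcost'.trans (mul_le_mul_of_nonneg_left oa (by linarith)))
  have hcnt := count ha0 hh0 hL ρ ρ'
  rw [aα, ← hy] at B1
  rw [hα', ← hy] at B2
  generalize ((range (2 * n)).filter
        (fun j => ¬ (gg j ≤ ρ (pt L a j) ∧ ρ (pt L a j) < gg j + 1))).card = b1 at *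
  generalize ((range (2 * n)).filter (fun j =>
        ¬ (gr j ≤ ρ' (pt L a (2 * n - j)) ∧ ρ' (pt L a (2 * n - j)) < gr j + 1))).card = b2 at *
  generalize ({p ∈ insert (qpt L a h (2 * n)) (PP L a (2 * n) : Set (AddCircle L)) |
                ρ' p ≠ Function.update ρ (qpt L a h (2 * n)) 0 p}.ncard) = g at *
  have hcnt' : 2 * (n:ℝ) ≤ g + b1 + b2 + 1 := by
    have : 2 * n ≤ g + b1 + b2 + 1 := by omega
    exact_mod_cast this
  have hεy : ε * y * 4 ≤ n * m := by
    have := mul_le_mul_of_nonneg_left hc3 (by linarith : (0:ℝ) ≤ n)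
    rw [hy]; linarith
  have hb1 : (b1:ℝ) * 2 ≤ n := by
    have : m * (b1 * 2) ≤ m * n := by linarith
    exact le_of_mul_le_mul_left this m0
  have hb2 : (b2:ℝ) * 2 ≤ n := by
    have : m * (b2 * 2) ≤ m * n := by linarith
    exact le_of_mul_le_mul_left this m0
  linarith
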